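/- The coefficients of N_n are asymptotically normal with mean μ_n = n/2 and variance σ_n² = (n² − n − 2)/(8(n−1)): setting p(n,k) := N_{n,k}/N_n(1) and σ_n := √((n² − n − 2)/(8(n−1))), for every fixed real x, lim_{n→∞} ∑_{k : k ≤ n/2 + x σ_n} p(n,k) = (1/√(2π)) ∫_{−∞}^{x} e^{−t²/2} dt. -/

import Mathlib

/-!
The proof goes through characteristic functions. The coefficients satisfy
`8 N_{n,k} = (2n+2) C(2n,2k) - C(2n+2,2k+1)` (`minusculeCoeff_eq`), a combination of an even and an
odd section of binomial rows. Expanding `(e^{iθ} ± e^{-iθ})^m` for `m = 2n` and `m = 2n+2` therefore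
gives the closed form (`coeff_sum_exp`)
`∑_k N_{n,k} e^{i(4k-2n)θ}
  = (4^n/8) ((n+1)(cos²ⁿ θ + (-sin² θ)ⁿ) - 2(cos²ⁿ⁺² θ - (-sin² θ)ⁿ⁺¹))`.
At `θ = 0` this is `N_n(1) = 4^n (n-1)/8`, and at `θ = t/(4σ_n)` it yields the characteristic function
of the normalized distribution (`charFun_law`). As `n θ² → t²/2`, the powers of the cosine tend to
`e^{-t²/2}` and those of the sine tend to `0`, so the characteristic functions converge to that of the
standard Gaussian. Lévy's theorem gives weak convergence, and since the Gaussian has no atoms, the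
portmanteau theorem gives convergence of the mass of `(-∞, x]`.
-/

open scoped Classical

/-- The coefficients `N_{n,k}` of the type A minuscule polynomial. -/
noncomputable def minusculeCoeff (n k : ℕ) : ℝ :=
  ((k * (n - k) * Nat.choose (2 * n + 2) (2 * k + 1) : ℕ) : ℝ) / (4 * (n : ℝ) + 2)

/-- `N_n(1) = ∑_{k=1}^{n-1} N_{n,k}`. -/
noncomputable def minusculeTotal (n : ℕ) : ℝ :=
  ∑ k ∈ Finset.Icc 1 (n - 1), minusculeCoeff n k

namespace Minuscule

open MeasureTheory Filter Topology

/-! ### Binomial sums over one parity class -/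

lemma sum_range_two_mul_add_one (f : ℕ → ℂ) (n : ℕ) :
    ∑ j ∈ Finset.range (2 * n + 1), f j =
      ∑ k ∈ Finset.range (n + 1), f (2 * k) + ∑ k ∈ Finset.range n, f (2 * k + 1) := by
  induction n with
  | zero => simp
  | succ n ih =>
    rw [show 2 * (n + 1) + 1 = 2 * n + 1 + 1 + 1 by ring, Finset.sum_range_succ,
      Finset.sum_range_succ, ih, Finset.sum_range_succ (fun k => f (2 * k)) (n + 1),
      Finset.sum_range_succ (fun k => f (2 * k + 1)) n]
    rw [show 2 * (n + 1) = 2 * n + 1 + 1 by ring]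
    ring

lemma sum_choose_even (a b : ℂ) (n : ℕ) :
    ∑ k ∈ Finset.range (n + 1), a ^ (2 * k) * b ^ (2 * n - 2 * k) * ((2 * n).choose (2 * k) : ℂ) =
      ((a + b) ^ (2 * n) + (-a + b) ^ (2 * n)) / 2 := by
  rw [add_pow, add_pow, sum_range_two_mul_add_one, sum_range_two_mul_add_one]
  have h1 : ∀ k : ℕ, (-a) ^ (2 * k) = a ^ (2 * k) := fun k => (even_two_mul k).neg_pow a
  have h2 : ∀ k : ℕ, (-a) ^ (2 * k + 1) = -a ^ (2 * k + 1) :=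
    fun k => (odd_two_mul_add_one k).neg_pow a
  simp only [h1, h2, neg_mul, Finset.sum_neg_distrib]
  ring

lemma sum_choose_odd (a b : ℂ) (n : ℕ) :
    ∑ k ∈ Finset.range n,
        a ^ (2 * k + 1) * b ^ (2 * n - (2 * k + 1)) * ((2 * n).choose (2 * k + 1) : ℂ) =
      ((a + b) ^ (2 * n) - (-a + b) ^ (2 * n)) / 2 := by
  rw [add_pow, add_pow, sum_range_two_mul_add_one, sum_range_two_mul_add_one]
  have h1 : ∀ k : ℕ, (-a) ^ (2 * k) = a ^ (2 * k) := fun k => (even_two_mul k).neg_pow a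
  have h2 : ∀ k : ℕ, (-a) ^ (2 * k + 1) = -a ^ (2 * k + 1) :=
    fun k => (odd_two_mul_add_one k).neg_pow a
  simp only [h1, h2, neg_mul, Finset.sum_neg_distrib]
  ring

lemma exp_pow_mul_exp_neg_pow (z : ℂ) (i j : ℕ) :
    Complex.exp z ^ i * Complex.exp (-z) ^ j = Complex.exp (((i : ℂ) - j) * z) := by
  rw [← Complex.exp_nat_mul, ← Complex.exp_nat_mul, ← Complex.exp_add]
  ring_nf

lemma exp_add_exp_neg (θ : ℂ) :
    (Complex.exp (θ * Complex.I) + Complex.exp (-(θ * Complex.I))) ^ 2 = 4 * Complex.cos θ ^ 2 := by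
  have := Complex.two_cos θ
  rw [← neg_mul, ← this]; ring

lemma neg_exp_add_exp_neg (θ : ℂ) :
    (-Complex.exp (θ * Complex.I) + Complex.exp (-(θ * Complex.I))) ^ 2 =
      4 * -(Complex.sin θ ^ 2) := by
  have := Complex.two_sin θ
  have h : Complex.sin θ = (Complex.exp (-θ * Complex.I) - Complex.exp (θ * Complex.I))
    * Complex.I / 2 := by rw [← this]; ring
  rw [h, ← neg_mul]
  ring_nf
  simp only [Complex.I_sq]
  ring

/-- Even part of the binomial expansions of `(e^{iθ} ± e^{-iθ})^{2n}`. -/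
lemma trig_even (θ : ℂ) (n : ℕ) :
    ∑ k ∈ Finset.range (n + 1),
        ((2 * n).choose (2 * k) : ℂ) * Complex.exp ((4 * k - 2 * n) * (θ * Complex.I)) =
      4 ^ n * ((Complex.cos θ ^ 2) ^ n + (-(Complex.sin θ ^ 2)) ^ n) / 2 := by
  have h := sum_choose_even (Complex.exp (θ * Complex.I)) (Complex.exp (-(θ * Complex.I))) n
  rw [pow_mul, pow_mul, exp_add_exp_neg, neg_exp_add_exp_neg, mul_pow, mul_pow, ← mul_add] at h
  rw [← h]
  refine Finset.sum_congr rfl fun k hk => ?_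
  have hk : 2 * k ≤ 2 * n := by have := Finset.mem_range.1 hk; omega
  rw [exp_pow_mul_exp_neg_pow, mul_comm, Nat.cast_sub hk]
  push_cast
  ring_nf

/-- Odd part of the binomial expansions of `(e^{iθ} ± e^{-iθ})^{2n+2}`; the exponents
`2(2k+1) - (2n+2) = 4k - 2n` agree with those of `trig_even`. -/
lemma trig_odd (θ : ℂ) (n : ℕ) :
    ∑ k ∈ Finset.range (n + 1),
        ((2 * n + 2).choose (2 * k + 1) : ℂ) * Complex.exp ((4 * k - 2 * n) * (θ * Complex.I)) =
      4 ^ (n + 1) * ((Complex.cos θ ^ 2) ^ (n + 1) - (-(Complex.sin θ ^ 2)) ^ (n + 1)) / 2 := by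
  have h := sum_choose_odd (Complex.exp (θ * Complex.I)) (Complex.exp (-(θ * Complex.I))) (n + 1)
  rw [pow_mul, pow_mul, exp_add_exp_neg, neg_exp_add_exp_neg, mul_pow, mul_pow, ← mul_sub] at h
  rw [← h]
  refine Finset.sum_congr rfl fun k hk => ?_
  have hk : 2 * k + 1 ≤ 2 * (n + 1) := by have := Finset.mem_range.1 hk; omega
  rw [exp_pow_mul_exp_neg_pow, mul_comm, Nat.cast_sub hk]
  push_cast
  ring_nf

/-- The absorption identity `(2k+1)(2n+1-2k) C(2n+2,2k+1) = (2n+2)(2n+1) C(2n,2k)` together with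
`4k(n-k) = (2k+1)(2n+1-2k) - (2n+1)` removes the polynomial weight `k(n-k)`. -/
lemma minusculeCoeff_eq (n k : ℕ) (hk : k ≤ n) :
    minusculeCoeff n k =
      ((2 * n + 2) * ((2 * n).choose (2 * k) : ℝ) - ((2 * n + 2).choose (2 * k + 1) : ℝ)) / 8 := by
  have e : (2 * k + 1) * (2 * n + 1 - 2 * k) * (2 * n + 2).choose (2 * k + 1) =
      (2 * n + 2) * (2 * n + 1) * (2 * n).choose (2 * k) := by
    have h1 := Nat.add_one_mul_choose_eq (2 * n + 1) (2 * k)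
    have h2 := Nat.choose_mul_succ_eq (2 * n) (2 * k)
    calc _ = (2 * n + 1 - 2 * k) * ((2 * n + 2).choose (2 * k + 1) * (2 * k + 1)) := by ring
      _ = (2 * n + 2) * ((2 * n + 1).choose (2 * k) * (2 * n + 1 - 2 * k)) := by
        rw [← h1]; ring
      _ = _ := by rw [← h2]; ring
  have e' : (2 * (k : ℝ) + 1) * (2 * n + 1 - 2 * k) * ((2 * n + 2).choose (2 * k + 1) : ℝ) =
      (2 * n + 2) * (2 * n + 1) * ((2 * n).choose (2 * k) : ℝ) := by
    have := congrArg (Nat.cast : ℕ → ℝ) e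
    push_cast [Nat.cast_sub (show 2 * k ≤ 2 * n + 1 by omega)] at this
    exact this
  unfold minusculeCoeff
  push_cast [Nat.cast_sub hk]
  have h0 : (4 * (n : ℝ) + 2) ≠ 0 := by positivity
  rw [div_eq_div_iff h0 (by norm_num)]
  linear_combination 2 * e'

lemma coeff_sum_exp (θ : ℂ) (n : ℕ) :
    ∑ k ∈ Finset.range (n + 1),
        (minusculeCoeff n k : ℂ) * Complex.exp ((4 * k - 2 * n) * (θ * Complex.I)) =
      4 ^ n / 8 * ((n + 1) * ((Complex.cos θ ^ 2) ^ n + (-(Complex.sin θ ^ 2)) ^ n)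
        - 2 * ((Complex.cos θ ^ 2) ^ (n + 1) - (-(Complex.sin θ ^ 2)) ^ (n + 1))) := by
  have h : ∀ k ∈ Finset.range (n + 1),
      (minusculeCoeff n k : ℂ) * Complex.exp ((4 * k - 2 * n) * (θ * Complex.I)) =
      (2 * n + 2) / 8 * (((2 * n).choose (2 * k) : ℂ) *
        Complex.exp ((4 * k - 2 * n) * (θ * Complex.I))) -
      1 / 8 * (((2 * n + 2).choose (2 * k + 1) : ℂ) *
        Complex.exp ((4 * k - 2 * n) * (θ * Complex.I))) := by
    intro k hk
    rw [minusculeCoeff_eq n k (by have := Finset.mem_range.1 hk; omega)]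
    push_cast
    ring
  rw [Finset.sum_congr rfl h, Finset.sum_sub_distrib, ← Finset.mul_sum, ← Finset.mul_sum,
    trig_even, trig_odd]
  ring

/-- The terms `k = 0` and `k = n` vanish. -/
lemma minusculeTotal_eq_sum_range (n : ℕ) :
    minusculeTotal n = ∑ k ∈ Finset.range (n + 1), minusculeCoeff n k := by
  unfold minusculeTotal
  refine Finset.sum_subset (fun k hk => ?_) fun k hk hk' => ?_
  · simp only [Finset.mem_Icc, Finset.mem_range] at *; omega
  · simp only [Finset.mem_Icc, Finset.mem_range] at *
    obtain rfl | rfl : k = 0 ∨ k = n := by omega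
    all_goals simp [minusculeCoeff]

/-- The case `θ = 0` of `coeff_sum_exp`. It fails for `n = 0`, where `(-sin² 0)^n = 1`. -/
lemma minusculeTotal_eq (n : ℕ) (hn : 1 ≤ n) : minusculeTotal n = 4 ^ n * (n - 1) / 8 := by
  have h := coeff_sum_exp 0 n
  have hn' : n ≠ 0 := by omega
  simp [hn'] at h
  rw [minusculeTotal_eq_sum_range]
  have h' : ((∑ k ∈ Finset.range (n + 1), minusculeCoeff n k : ℝ) : ℂ) =
    ((4 ^ n * (n - 1) / 8 : ℝ) : ℂ) := by
    push_cast
    rw [h]; ring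
  exact_mod_cast h'

lemma minusculeCoeff_nonneg (n k : ℕ) : 0 ≤ minusculeCoeff n k := by
  unfold minusculeCoeff; positivity

/-! ### The normalized distribution -/

/-- The standard deviation `σ_n`. It is positive for `n ≥ 3`. -/
noncomputable def sd (n : ℕ) : ℝ := Real.sqrt (((n : ℝ) ^ 2 - n - 2) / (8 * ((n : ℝ) - 1)))

lemma var_pos {n : ℕ} (hn : 3 ≤ n) : 0 < ((n : ℝ) ^ 2 - n - 2) / (8 * ((n : ℝ) - 1)) := by
  have : (3 : ℝ) ≤ n := by exact_mod_cast hn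
  apply div_pos <;> nlinarith

lemma total_pos {n : ℕ} (hn : 3 ≤ n) : 0 < minusculeTotal n := by
  have : (3 : ℝ) ≤ n := by exact_mod_cast hn
  rw [minusculeTotal_eq n (by omega)]
  have : (0 : ℝ) < n - 1 := by linarith
  positivity

/-- The law of `(K - n/2) / σ_n`, where `K = k` with probability `N_{n,k} / N_n(1)`. It is a probability
measure for `n ≥ 3`. -/
noncomputable def law (n : ℕ) : Measure ℝ :=
  ∑ k ∈ Finset.range (n + 1),
    ENNReal.ofReal (minusculeCoeff n k / minusculeTotal n) •
      Measure.dirac (((k : ℝ) - n / 2) / sd n)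

lemma prob_nonneg {n : ℕ} (hn : 3 ≤ n) (k : ℕ) : 0 ≤ minusculeCoeff n k / minusculeTotal n :=
  div_nonneg (minusculeCoeff_nonneg n k) (total_pos hn).le

lemma isProbabilityMeasure_law {n : ℕ} (hn : 3 ≤ n) : IsProbabilityMeasure (law n) := by
  constructor
  simp only [law, Measure.coe_finsetSum, Finset.sum_apply, Measure.smul_apply, measure_univ,
    smul_eq_mul, mul_one]
  rw [← ENNReal.ofReal_sum_of_nonneg fun k _ => prob_nonneg hn k, ← Finset.sum_div,
    ← minusculeTotal_eq_sum_range, div_self (total_pos hn).ne', ENNReal.ofReal_one]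

lemma law_Iic {n : ℕ} (hn : 3 ≤ n) (x : ℝ) :
    law n (Set.Iic x) = ENNReal.ofReal (∑ k ∈ (Finset.range (n + 1)).filter
      (fun k : ℕ => (k : ℝ) ≤ (n : ℝ) / 2 + x * sd n), minusculeCoeff n k / minusculeTotal n) := by
  have hs : 0 < sd n := Real.sqrt_pos.2 (var_pos hn)
  rw [ENNReal.ofReal_sum_of_nonneg fun k _ => prob_nonneg hn k, Finset.sum_filter]
  simp only [law, Measure.coe_finsetSum, Finset.sum_apply, Measure.smul_apply,
    smul_eq_mul]
  refine Finset.sum_congr rfl fun k _ => ?_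
  rw [Measure.dirac_apply' _ measurableSet_Iic]
  have : ((k : ℝ) - n / 2) / sd n ≤ x ↔ (k : ℝ) ≤ (n : ℝ) / 2 + x * sd n := by
    rw [div_le_iff₀ hs, sub_le_iff_le_add']
  simp only [Set.indicator_apply, Set.mem_Iic, this]
  split_ifs <;> simp

/-- The characteristic function in closed form. The angle is `θ = t / (4 σ_n)` because
`t (k - n/2) / σ_n = (4k - 2n) θ`. -/
lemma charFun_law {n : ℕ} (hn : 3 ≤ n) (t : ℝ) :
    charFun (law n) t =
      (((((n : ℝ) + 1) * ((Real.cos (t / (4 * sd n)) ^ 2) ^ n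
          + (-(Real.sin (t / (4 * sd n)) ^ 2)) ^ n)
        - 2 * ((Real.cos (t / (4 * sd n)) ^ 2) ^ (n + 1)
          - (-(Real.sin (t / (4 * sd n)) ^ 2)) ^ (n + 1))) / ((n : ℝ) - 1) : ℝ) : ℂ) := by
  have hs : sd n ≠ 0 := (Real.sqrt_pos.2 (var_pos hn)).ne'
  have hs' : (sd n : ℂ) ≠ 0 := by exact_mod_cast hs
  have hn1 : (n : ℝ) - 1 ≠ 0 := by
    have : (3 : ℝ) ≤ n := by exact_mod_cast hn
    linarith
  have hn1' : (n : ℂ) - 1 ≠ 0 := by exact_mod_cast hn1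
  rw [charFun_apply_real, law, integral_finsetSum_measure]
  · simp only [integral_smul_measure, integral_dirac]
    have h := coeff_sum_exp ((t / (4 * sd n) : ℝ) : ℂ) n
    rw [← Complex.ofReal_cos, ← Complex.ofReal_sin] at h
    have h2 : ∀ k ∈ Finset.range (n + 1),
        (ENNReal.ofReal (minusculeCoeff n k / minusculeTotal n)).toReal •
          Complex.exp (t * ((((k : ℝ) - n / 2) / sd n : ℝ) : ℂ) * Complex.I) =
        (minusculeTotal n : ℂ)⁻¹ * ((minusculeCoeff n k : ℂ) *
          Complex.exp ((4 * k - 2 * n) * (((t / (4 * sd n) : ℝ) : ℂ) * Complex.I))) := by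
      intro k _
      rw [ENNReal.toReal_ofReal (prob_nonneg hn k), Complex.real_smul]
      have : (t * ((((k : ℝ) - n / 2) / sd n : ℝ) : ℂ) * Complex.I) =
          ((4 * k - 2 * n) * (((t / (4 * sd n) : ℝ) : ℂ) * Complex.I)) := by
        push_cast
        field_simp
        ring
      rw [this]
      push_cast
      ring
    rw [Finset.sum_congr rfl h2, ← Finset.mul_sum, h, minusculeTotal_eq n (by omega)]
    push_cast
    field_simp
  · intro k _
    refine Integrable.smul_measure ?_ ENNReal.ofReal_ne_top
    exact integrable_dirac (by simp)

/-! ### Limits of the characteristic functions -/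

lemma tendsto_div_sub_one (c : ℝ) :
    Tendsto (fun n : ℕ => ((n : ℝ) + c) / ((n : ℝ) - 1)) atTop (𝓝 1) := by
  have h : Tendsto (fun n : ℕ => 1 + (c + 1) * ((n : ℝ) - 1)⁻¹) atTop (𝓝 (1 + (c + 1) * 0)) :=
    (((tendsto_atTop_add_const_right _ (-1) tendsto_natCast_atTop_atTop).inv_tendsto_atTop).const_mul
      _).const_add _
  rw [mul_zero, add_zero] at h
  refine h.congr' ?_
  filter_upwards [eventually_ge_atTop 2] with n hn
  have : (2 : ℝ) ≤ n := by exact_mod_cast hn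
  have : (n : ℝ) - 1 ≠ 0 := by linarith
  field_simp
  ring

lemma tendsto_two_div_sub_one :
    Tendsto (fun n : ℕ => 2 / ((n : ℝ) - 1)) atTop (𝓝 0) :=
  (tendsto_atTop_add_const_right _ (-1) tendsto_natCast_atTop_atTop).const_div_atTop 2

/-- Since `σ_n² = (n-2)(n+1) / (8(n-1))`, it grows like `n/8`, so `n (t / (4 σ_n))² → t²/2`. -/
lemma tendsto_angle_sq (t : ℝ) :
    Tendsto (fun n : ℕ => (n : ℝ) * (t / (4 * sd n)) ^ 2) atTop (𝓝 (t ^ 2 / 2)) := by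
  have h : Tendsto (fun n : ℕ => t ^ 2 / 2 * ((((n : ℝ) + (-2)) / ((n : ℝ) - 1))⁻¹ *
      ((((n : ℝ) + 1) / ((n : ℝ) - 1))⁻¹ * (((n : ℝ) + 0) / ((n : ℝ) - 1))))) atTop
      (𝓝 (t ^ 2 / 2 * ((1 : ℝ)⁻¹ * ((1 : ℝ)⁻¹ * 1)))) :=
    (((tendsto_div_sub_one (-2)).inv₀ one_ne_zero).mul
      (((tendsto_div_sub_one 1).inv₀ one_ne_zero).mul (tendsto_div_sub_one 0))).const_mul _
  simp only [inv_one, mul_one] at h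
  refine h.congr' ?_
  filter_upwards [eventually_ge_atTop 3] with n hn
  have h3 : (3 : ℝ) ≤ n := by exact_mod_cast hn
  have h1 : (n : ℝ) - 1 ≠ 0 := by linarith
  have h2 : (n : ℝ) + -2 ≠ 0 := by linarith
  have h4 : (n : ℝ) + 1 ≠ 0 := by linarith
  rw [div_pow, mul_pow, sd, Real.sq_sqrt (var_pos hn).le,
    show (n : ℝ) ^ 2 - n - 2 = (n + -2) * (n + 1) by ring]
  field_simp
  ring

lemma tendsto_angle (t : ℝ) : Tendsto (fun n : ℕ => t / (4 * sd n)) atTop (𝓝 0) := by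
  have h := (tendsto_angle_sq t).mul tendsto_inv_atTop_nhds_zero_nat
  rw [mul_zero] at h
  have h2 : Tendsto (fun n : ℕ => (t / (4 * sd n)) ^ 2) atTop (𝓝 0) := by
    refine h.congr' ?_
    filter_upwards [eventually_ge_atTop 1] with n hn
    have : (n : ℝ) ≠ 0 := by positivity
    field_simp
  have h3 := h2.sqrt
  simp only [Real.sqrt_sq_eq_abs, Real.sqrt_zero] at h3
  exact (tendsto_zero_iff_abs_tendsto_zero _).2 h3

/-- Write `cos² θ = 1 - θ² sinc² θ` with `n θ² → t²/2` and `sinc θ → 1`. -/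
lemma tendsto_cos_pow (t : ℝ) :
    Tendsto (fun n : ℕ => (Real.cos (t / (4 * sd n)) ^ 2) ^ n) atTop
      (𝓝 (Real.exp (-t ^ 2 / 2))) := by
  have hsinc : Tendsto (fun n : ℕ => Real.sinc (t / (4 * sd n))) atTop (𝓝 1) := by
    have := (Real.continuous_sinc.tendsto 0).comp (tendsto_angle t)
    rwa [Real.sinc_zero] at this
  have h : Tendsto (fun n : ℕ => (n : ℝ) * -(Real.sin (t / (4 * sd n)) ^ 2)) atTop
      (𝓝 (-t ^ 2 / 2)) := by
    have := ((tendsto_angle_sq t).mul (hsinc.pow 2)).neg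
    rw [one_pow, mul_one, ← neg_div] at this
    refine this.congr fun n => ?_
    have : Real.sin (t / (4 * sd n)) = t / (4 * sd n) * Real.sinc (t / (4 * sd n)) := by
      by_cases h0 : t / (4 * sd n) = 0
      · simp [h0]
      · rw [Real.sinc_of_ne_zero h0, mul_div_cancel₀ _ h0]
    rw [this]; ring
  refine (Real.tendsto_one_add_pow_exp_of_tendsto h).congr fun n => ?_
  rw [Real.cos_sq']
  ring

lemma tendsto_sin_sq (t : ℝ) :
    Tendsto (fun n : ℕ => Real.sin (t / (4 * sd n)) ^ 2) atTop (𝓝 0) := by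
  have := ((Real.continuous_sin.tendsto 0).comp (tendsto_angle t)).pow 2
  simpa using this

lemma tendsto_sin_pow (t : ℝ) :
    Tendsto (fun n : ℕ => (-(Real.sin (t / (4 * sd n)) ^ 2)) ^ n) atTop (𝓝 0) := by
  refine squeeze_zero_norm' ?_
    (tendsto_pow_atTop_nhds_zero_of_lt_one (r := (1 / 2 : ℝ)) (by norm_num) (by norm_num))
  filter_upwards [(tendsto_sin_sq t).eventually (ge_mem_nhds (show (0 : ℝ) < 1 / 2 by norm_num))]
    with n hn
  rw [norm_pow, norm_neg, Real.norm_of_nonneg (sq_nonneg _)]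
  gcongr

lemma tendsto_charFun_law (t : ℝ) :
    Tendsto (fun n : ℕ => charFun (law n) t) atTop
      (𝓝 ((Real.exp (-t ^ 2 / 2) : ℝ) : ℂ)) := by
  have hc := tendsto_cos_pow t
  have hs := tendsto_sin_pow t
  have hcos : Tendsto (fun n : ℕ => Real.cos (t / (4 * sd n)) ^ 2) atTop (𝓝 1) := by
    have := (tendsto_sin_sq t).const_sub 1
    rw [sub_zero] at this
    exact this.congr fun n => (Real.cos_sq' _).symm
  have h := ((tendsto_div_sub_one 1).mul (hc.add hs)).sub
    (tendsto_two_div_sub_one.mul ((hc.mul hcos).sub (hs.mul (tendsto_sin_sq t).neg)))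
  simp only [one_mul, add_zero, zero_mul, sub_zero] at h
  refine ((Complex.continuous_ofReal.tendsto _).comp h).congr' ?_
  filter_upwards [eventually_ge_atTop 3] with n hn
  rw [charFun_law hn]
  simp only [Function.comp]
  congr 1
  ring

lemma tendsto_law_Iic (x : ℝ) :
    Tendsto (fun n : ℕ => law n (Set.Iic x)) atTop
      (𝓝 (ProbabilityTheory.gaussianReal 0 1 (Set.Iic x))) := by
  -- The shift by 3 makes every `law (n + 3)` a probability measure.
  rw [← tendsto_add_atTop_iff_nat 3]
  let P : ℕ → ProbabilityMeasure ℝ :=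
    fun n => ⟨law (n + 3), isProbabilityMeasure_law (by omega)⟩
  let G : ProbabilityMeasure ℝ := ⟨ProbabilityTheory.gaussianReal 0 1, inferInstance⟩
  have hPG : Tendsto P atTop (𝓝 G) := by
    refine ProbabilityMeasure.tendsto_iff_tendsto_charFun.2 fun t => ?_
    have h := (tendsto_add_atTop_iff_nat 3).2 (tendsto_charFun_law t)
    have hg : charFun (G : Measure ℝ) t = ((Real.exp (-t ^ 2 / 2) : ℝ) : ℂ) := by
      change charFun (ProbabilityTheory.gaussianReal 0 1) t = _
      rw [ProbabilityTheory.charFun_gaussianReal]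
      push_cast
      congr 1
      simp
      ring
    rw [hg]
    exact h
  refine ProbabilityMeasure.tendsto_measure_of_null_frontier_of_tendsto' hPG ?_
  rw [frontier_Iic]
  have := ProbabilityTheory.nullSingletonClass_gaussianReal (μ := 0) (v := 1) one_ne_zero
  exact measure_singleton (μ := ProbabilityTheory.gaussianReal 0 1) x

end Minuscule

/-- The coefficients of `N_n` are asymptotically normal with mean `μ_n = n/2` and
variance `σ_n² = (n² − n − 2)/(8(n−1))`: for every fixed real `x`,
`∑_{k ≤ n/2 + x σ_n} N_{n,k}/N_n(1)` tends to `(1/√(2π)) ∫_{−∞}^{x} e^{−t²/2} dt`. -/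
theorem minusculeN_asymptotically_normal (x : ℝ) :
    Filter.Tendsto
      (fun n : ℕ =>
        ∑ k ∈ (Finset.range (n + 1)).filter
            (fun k : ℕ => (k : ℝ) ≤ (n : ℝ) / 2 +
              x * Real.sqrt (((n : ℝ) ^ 2 - n - 2) / (8 * ((n : ℝ) - 1)))),
          minusculeCoeff n k / minusculeTotal n)
      Filter.atTop
      (nhds ((1 / Real.sqrt (2 * Real.pi)) * ∫ t in Set.Iic x, Real.exp (-t ^ 2 / 2))) := by
  have h := (ENNReal.tendsto_toReal
    (MeasureTheory.measure_ne_top _ _)).comp (Minuscule.tendsto_law_Iic x)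
  have hg : (ProbabilityTheory.gaussianReal 0 1 (Set.Iic x)).toReal =
      (1 / Real.sqrt (2 * Real.pi)) * ∫ t in Set.Iic x, Real.exp (-t ^ 2 / 2) := by
    rw [ProbabilityTheory.gaussianReal_apply_eq_integral 0 one_ne_zero, ENNReal.toReal_ofReal
      (MeasureTheory.integral_nonneg fun t => ProbabilityTheory.gaussianPDFReal_nonneg _ _ _),
      ← MeasureTheory.integral_const_mul]
    simp [ProbabilityTheory.gaussianPDFReal]
  rw [hg] at h
  refine h.congr' ?_
  filter_upwards [Filter.eventually_ge_atTop 3] with n hn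
  rw [Function.comp_apply, Minuscule.law_Iic hn, ENNReal.toReal_ofReal
    (Finset.sum_nonneg fun k _ => Minuscule.prob_nonneg hn k)]
  rfl
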